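/- Consider a team of n members with exogenous vector ξ ∈ ℝ^{d_ξ}, information matrices H^i ∈ ℝ^{d_z^i × d_ξ} and D^{ij} ∈ ℝ^{d_z^i × d_u^j} with D^{ij} = 0 whenever j ≥ i, and a linear team strategy given by matrices K^{ij} ∈ ℝ^{d_u^i × d_z^j} for j ≤ i. For each ξ define recursively (in increasing i) Z_K^i(ξ) = H^i ξ + Σ_{j<i} D^{ij} U_K^j(ξ) and U_K^i(ξ) = Σ_{j≤i} K^{ij} Z_K^j(ξ). Fix indices t, s, k with s < t, s ≤ k, and k ≠ t, and suppose there is a matrix Λ ∈ ℝ^{d_u^k × d_u^t} with D^{mk} Λ = D^{mt} for every m ∈ {1,…,n}. Define a new linear team strategy K' by K'^{ts} = 0, K'^{ks} = K^{ks} + Λ K^{ts}, and K'^{ij} = K^{ij} for all other blocks. Then Z_{K'}^r(ξ) = Z_K^r(ξ) for every member r ∈ {1,…,n} and every ξ ∈ ℝ^{d_ξ}. -/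

import Mathlib

/-!
The proof is by strong induction on `r`. If information is unchanged for all members before `r`,
then for `j < r` the action of member `j` changes by `δ j`, the effect of `K' - K` on the old
information. Only `δ k = Λ Kᵗˢ Zˢ` and `δ t = -Kᵗˢ Zˢ` can be nonzero, and
their contributions `Dʳᵏ Λ Kᵗˢ Zˢ` and `-Dʳᵗ Kᵗˢ Zˢ` to `Zʳ` cancel by the identity `Dʳᵏ Λ = Dʳᵗ`.
Terms with `j ≥ r` vanish because `D r j = 0`, so the relative order of `k`, `t` and `r`
plays no role (`Z_eq_sum`).
-/

namespace DynamicTeam4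

variable {n dxi : ℕ} {dz du : Fin n → ℕ}
  (H : (i : Fin n) → (Fin dxi → ℝ) →ₗ[ℝ] (Fin (dz i) → ℝ))
  (D : (i j : Fin n) → (Fin (du j) → ℝ) →ₗ[ℝ] (Fin (dz i) → ℝ))
  (K : (i j : Fin n) → (Fin (dz j) → ℝ) →ₗ[ℝ] (Fin (du i) → ℝ))

mutual
/-- Member `i`'s information `Zᵢ(ξ) = Hᵢ ξ + Σ_{j<i} Dᵢⱼ Uⱼ(ξ)` under the linear team
strategy `K`. -/
noncomputable def Z : (i : Fin n) → (Fin dxi → ℝ) → (Fin (dz i) → ℝ)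
  | i => fun ξ => H i ξ + ∑ j : Fin n, if h : j < i then D i j (U j ξ) else 0
  termination_by i => 2 * i.val
  decreasing_by have := h; omega

/-- Member `i`'s action `Uᵢ(ξ) = Σ_{j≤i} Kᵢⱼ Zⱼ(ξ)` under the linear team strategy `K`. -/
noncomputable def U : (i : Fin n) → (Fin dxi → ℝ) → (Fin (du i) → ℝ)
  | i => fun ξ => ∑ j : Fin n, if h : j ≤ i then K i j (Z j ξ) else 0
  termination_by i => 2 * i.val + 1
  decreasing_by have := h; omega
end

end DynamicTeam4

/-- The constraint `j < i` in the recursion for `Z` may be dropped, since `D i j = 0` otherwise. -/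
theorem DynamicTeam4.Z_eq_sum {n dxi : ℕ} {dz du : Fin n → ℕ}
    (H : (i : Fin n) → (Fin dxi → ℝ) →ₗ[ℝ] (Fin (dz i) → ℝ))
    (D : (i j : Fin n) → (Fin (du j) → ℝ) →ₗ[ℝ] (Fin (dz i) → ℝ))
    (hD : ∀ i j : Fin n, i ≤ j → D i j = 0)
    (K : (i j : Fin n) → (Fin (dz j) → ℝ) →ₗ[ℝ] (Fin (du i) → ℝ))
    (i : Fin n) (ξ : Fin dxi → ℝ) :
    DynamicTeam4.Z H D K i ξ = H i ξ + ∑ j, D i j (DynamicTeam4.U H D K j ξ) := by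
  rw [DynamicTeam4.Z]
  beta_reduce
  congr 1
  refine Finset.sum_congr rfl fun j _ => ?_
  split_ifs with h
  · rfl
  · simp [hD i j (not_lt.mp h)]

open DynamicTeam4 in
/-- Equation (20) in the proof of Claim 1 of the paper: the strategy transformation of
Procedure 1 (removing `Kᵗˢ Zˢ` from member `t`'s linear strategy and adding the
compensating term `Λ Kᵗˢ Zˢ` to member `k`'s strategy, where `Dᵐᵏ Λ = Dᵐᵗ` for all `m`)
leaves every member's information vector `Zʳ(ξ)` unchanged. -/
theorem procedure1_preserves_information
    (n dxi : ℕ) (dz du : Fin n → ℕ)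
    (H : (i : Fin n) → (Fin dxi → ℝ) →ₗ[ℝ] (Fin (dz i) → ℝ))
    (D : (i j : Fin n) → (Fin (du j) → ℝ) →ₗ[ℝ] (Fin (dz i) → ℝ))
    (hD : ∀ i j : Fin n, i ≤ j → D i j = 0)
    (K K' : (i j : Fin n) → (Fin (dz j) → ℝ) →ₗ[ℝ] (Fin (du i) → ℝ))
    (t s k : Fin n) (hst : s < t) (hsk : s ≤ k) (hkt : k ≠ t)
    (Λ : (Fin (du t) → ℝ) →ₗ[ℝ] (Fin (du k) → ℝ))
    (hΛ : ∀ m : Fin n, D m k ∘ₗ Λ = D m t)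
    (hK't : K' t s = 0)
    (hK'k : K' k s = K k s + Λ ∘ₗ K t s)
    (hK' : ∀ i j : Fin n, ¬(i = t ∧ j = s) → ¬(i = k ∧ j = s) → K' i j = K i j) :
    ∀ (r : Fin n) (ξ : Fin dxi → ℝ), Z H D K' r ξ = Z H D K r ξ := by
  intro r ξ
  induction r using WellFoundedLT.induction with
  | ind r ih =>
  -- The change of member `j`'s action when the new gains are applied to the old information.
  let δ : (j : Fin n) → (Fin (du j) → ℝ) := fun j =>
    ∑ l : Fin n, if l ≤ j then (K' j l - K j l) (Z H D K l ξ) else 0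
  have hδ : ∀ j, j < r → U H D K' j ξ = U H D K j ξ + δ j := by
    intro j hj
    rw [U, U]
    beta_reduce
    rw [← Finset.sum_add_distrib]
    refine Finset.sum_congr rfl fun l _ => ?_
    by_cases h : l ≤ j
    · simp [h, ih l (h.trans_lt hj)]
    · simp [h]
  have hδ_s : ∀ j, s ≤ j → δ j = (K' j s - K j s) (Z H D K s ξ) := by
    intro j hj
    refine (Finset.sum_eq_single s (fun l _ hl => ?_) (by simp)).trans (by simp [hj])
    simp [hK' j l (fun h => hl h.2) (fun h => hl h.2)]
  have hδ_zero : ∀ j, j ≠ k → j ≠ t → δ j = 0 := by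
    intro j hjk hjt
    refine Finset.sum_eq_zero fun l _ => ?_
    simp [hK' j l (fun h => hjt h.1) (fun h => hjk h.1)]
  have hδ_k : δ k = Λ (K t s (Z H D K s ξ)) := by
    rw [hδ_s k hsk, hK'k]; simp
  have hδ_t : δ t = -K t s (Z H D K s ξ) := by
    rw [hδ_s t hst.le, hK't]; simp
  have hsum : ∑ j, D r j (δ j) = 0 := by
    rw [Finset.sum_eq_add k t hkt (fun j _ hj => by simp [hδ_zero j hj.1 hj.2])
      (by simp) (by simp), hδ_k, hδ_t, ← hΛ r]
    simp
  rw [Z_eq_sum H D hD, Z_eq_sum H D hD, ← add_zero (∑ j, D r j (U H D K j ξ)), ← hsum,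
    ← Finset.sum_add_distrib]
  congr 1
  refine Finset.sum_congr rfl fun j _ => ?_
  by_cases hj : j < r
  · rw [hδ j hj, map_add]
  · simp [hD r j (not_lt.mp hj)]
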